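/- arXiv:0712.0576 — 3 statements merged into one kernel-verified Lean document; each statement's English description precedes it below -/
import Mathlib

section
/- Let α ∈ ℝ and let ρ be a nonzero σ-finite measure on (0,∞) such that ∫₀^∞ (y^{α−δ} ∨ y^{α+δ}) ρ(dy) < ∞ for some δ > 0. Then ρ has the cancellation property with respect to {ν_α} if and only if ∫₀^∞ y^{α+iθ} ρ(dy) ≠ 0 for all θ ∈ ℝ. -/
/-!
In logarithmic coordinates, and after tilting by `y ^ α` (`logTilt`), multiplicative convolution
becomes additive convolution on `ℝ` (`logTilt_mulConv`), `ν_α` becomes a multiple of Lebesgue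
measure (`logTilt_nuAlpha`), and `ρ` becomes a finite measure `σ` with exponential moments whose
characteristic function at `θ` is the Mellin integral of `ρ` at `α + iθ` (`mellin_eq_charFun`).
Nothing is lost, since `logTilt` is injective on measures carried by `(0,∞)`. So the claim is:
`σ ∗ μ = σ ∗ (c • volume)` forces `μ = c • volume` exactly when `charFun σ` has no zero.

If `charFun σ θ = 0`, then `c (1 + cos (θ t)) dt` has the same convolution with `σ` as `c dt`
(`mellin_ne_zero_of_cancellation`).

Conversely, let `charFun σ` have no zero. As `σ` has all moments, `charFun σ` is smooth, so for a
test function `φ` the quotient `φ / charFun σ (-2π ·)` is again a test function, and its Fourier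
transform `ψ` is integrable with `∫ ψ (y + x) σ(dy) = 𝓕 φ x` (`exists_correlation_eq_fourier`).
Integrating this against `μ` and using Fubini gives `∫ 𝓕 φ dμ = ∫ ψ d(σ ∗ μ)`, which depends on `μ`
only through `σ ∗ μ`; absolute convergence comes from `σ ∗ μ` being a multiple of Lebesgue measure.
Translating `φ` modulates `𝓕 φ`, so for a real transform `g = 𝓕 φ` the measures `g μ₁` and `g μ₂`
have equal characteristic functions and hence agree (`withDensity_add_eq`). Choosing `g` positive on
ever larger intervals (`exists_fourier_pos`) gives `μ₁ = μ₂` (`eq_of_conv_eq`).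
-/

open MeasureTheory Set Filter ProbabilityTheory
open scoped ENNReal Topology

noncomputable section

/-- Multiplicative convolution of two measures (on `(0,∞)`, modeled as measures on `ℝ`):
`(ν ⊛ ρ)(B) = ∫ ν(x⁻¹ B) ρ(dx)`. -/
def mulConv (ν ρ : Measure ℝ) : Measure ℝ :=
  ρ.bind fun x => ν.map fun y => x * y

/-- The measure `ν_α` on `(0,∞)`, with density `|α| x^{-(α+1)}` w.r.t. Lebesgue measure
when `α ≠ 0`, and density `x⁻¹` when `α = 0`. -/
def nuAlpha (α : ℝ) : Measure ℝ :=
  (volume.restrict (Ioi (0:ℝ))).withDensity fun x =>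
    ENNReal.ofReal (if α = 0 then x⁻¹ else |α| * x ^ (-(α + 1)))

/-- `L` is slowly varying at infinity: `L(cx)/L(x) → 1` as `x → ∞`, for every `c > 0`. -/
def SlowlyVarying (L : ℝ → ℝ) : Prop :=
  ∀ c : ℝ, 0 < c → Tendsto (fun x => L (c * x) / L x) atTop (nhds 1)

/-- The measure `μ` has a regularly varying (right) tail with exponent `α`:
`μ(x,∞) = x^{-α} L(x)` for all `x > 0`, where `L` is slowly varying
(and eventually positive) at infinity. -/
def HasRegVarTail (μ : Measure ℝ) (α : ℝ) : Prop :=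
  ∃ L : ℝ → ℝ, SlowlyVarying L ∧ (∀ᶠ x in atTop, 0 < L x) ∧
    ∀ x : ℝ, 0 < x → μ (Ioi x) = ENNReal.ofReal (x ^ (-α) * L x)

/-- The moment condition `∫₀^∞ (y^{α-δ} ∨ y^{α+δ}) ρ(dy) < ∞`. -/
def MomentCond (ρ : Measure ℝ) (α δ : ℝ) : Prop :=
  ∫⁻ y in Ioi (0:ℝ), ENNReal.ofReal (max (y ^ (α - δ)) (y ^ (α + δ))) ∂ρ < ⊤

/-- The nonvanishing condition `∫₀^∞ y^{α+iθ} ρ(dy) ≠ 0` for all `θ ∈ ℝ`. -/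
def MellinNonvanishing (ρ : Measure ℝ) (α : ℝ) : Prop :=
  ∀ θ : ℝ, (∫ y in Ioi (0:ℝ), (y : ℂ) ^ ((α : ℂ) + (θ : ℂ) * Complex.I) ∂ρ) ≠ 0

/-- `ρ` has the cancellation property with respect to `{ν_α}`: for every σ-finite
measure `ν` on `(0,∞)`, `ν ⊛ ρ = ν_α ⊛ ρ` implies `ν = ν_α`. -/
def HasCancellation (ρ : Measure ℝ) (α : ℝ) : Prop :=
  ∀ ν : Measure ℝ, SigmaFinite ν → ν (Iic 0) = 0 →
    mulConv ν ρ = mulConv (nuAlpha α) ρ → ν = nuAlpha α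

/-- Condition (2.18): `lim_{b↓0} limsup_{x→∞} (∫₀^b ρ(x/y,∞) ν(dy)) / ((ν⊛ρ)(x,∞)) = 0`. -/
def Cond218 (ν ρ : Measure ℝ) : Prop :=
  Tendsto (fun b : ℝ =>
      limsup (fun x : ℝ =>
        (∫⁻ y in Ioc (0:ℝ) b, ρ (Ioi (x / y)) ∂ν).toReal
          / ((mulConv ν ρ) (Ioi x)).toReal) atTop)
    (nhdsWithin 0 (Ioi 0)) (nhds 0)

/-! ### Logarithmic coordinates -/

/-- Passage to logarithmic coordinates: the image of the tilted measure `y ^ α μ(dy)` under `log`,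
a measure on the additive group `ℝ`. It is meant for measures with `μ (Iic 0) = 0`: elsewhere the
junk values of `Real.log` and `rpow` on `(-∞,0]` would intervene. -/
def logTilt (α : ℝ) (μ : Measure ℝ) : Measure ℝ :=
  (μ.withDensity fun y => ENNReal.ofReal (y ^ α)).map Real.log

instance (α : ℝ) (μ : Measure ℝ) [SFinite μ] : SFinite (logTilt α μ) := by
  unfold logTilt; infer_instance

lemma measurable_tilt (α : ℝ) : Measurable fun y : ℝ => ENNReal.ofReal (y ^ α) := by
  fun_prop

lemma lintegral_logTilt (α : ℝ) (μ : Measure ℝ) {f : ℝ → ℝ≥0∞} (hf : Measurable f) :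
    ∫⁻ s, f s ∂(logTilt α μ) = ∫⁻ y, ENNReal.ofReal (y ^ α) * f (Real.log y) ∂μ := by
  rw [logTilt, lintegral_map hf Real.measurable_log,
    lintegral_withDensity_eq_lintegral_mul _ (measurable_tilt α)
      (g := fun y => f (Real.log y)) (by fun_prop)]
  rfl

lemma ae_pos_of_null {μ : Measure ℝ} (h : μ (Iic 0) = 0) : ∀ᵐ y ∂μ, 0 < y := by
  have : {y : ℝ | ¬ 0 < y} = Iic 0 := by ext; simp
  rw [ae_iff, this, h]

/-- Integrals against `μ` are recovered from `logTilt α μ`. -/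
lemma lintegral_eq_logTilt (α : ℝ) {μ : Measure ℝ} (h : μ (Iic 0) = 0)
    {F : ℝ → ℝ≥0∞} (hF : Measurable F) :
    ∫⁻ y, F y ∂μ =
      ∫⁻ s, F (Real.exp s) * ENNReal.ofReal (Real.exp (-(α * s))) ∂(logTilt α μ) := by
  rw [lintegral_logTilt _ _ (by fun_prop)]
  refine lintegral_congr_ae ?_
  filter_upwards [ae_pos_of_null h] with y hy
  rw [Real.exp_log hy, mul_left_comm, ← ENNReal.ofReal_mul (by positivity),
    Real.rpow_def_of_pos hy, ← Real.exp_add]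
  simp [mul_comm]

lemma logTilt_injective (α : ℝ) {μ₁ μ₂ : Measure ℝ} (h₁ : μ₁ (Iic 0) = 0) (h₂ : μ₂ (Iic 0) = 0)
    (h : logTilt α μ₁ = logTilt α μ₂) : μ₁ = μ₂ := by
  refine Measure.ext_of_lintegral _ fun F hF => ?_
  rw [lintegral_eq_logTilt α h₁ hF, lintegral_eq_logTilt α h₂ hF, h]

lemma measurable_map_mul (ν : Measure ℝ) [SFinite ν] :
    Measurable fun x : ℝ => ν.map fun y => x * y := by
  refine Measure.measurable_of_measurable_coe _ fun s hs => ?_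
  have h : ∀ x : ℝ, (ν.map fun y => x * y) s = ν (Prod.mk x ⁻¹' {p : ℝ × ℝ | p.1 * p.2 ∈ s}) :=
    fun x => Measure.map_apply (by fun_prop) hs
  simp_rw [h]
  exact measurable_measure_prodMk_left (measurable_mul hs)

lemma lintegral_mulConv (ν ρ : Measure ℝ) [SFinite ν] {F : ℝ → ℝ≥0∞} (hF : Measurable F) :
    ∫⁻ z, F z ∂(mulConv ν ρ) = ∫⁻ x, ∫⁻ y, F (x * y) ∂ν ∂ρ := by
  rw [mulConv, Measure.lintegral_bind (measurable_map_mul ν).aemeasurable hF.aemeasurable]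
  refine lintegral_congr fun x => ?_
  rw [lintegral_map hF (by fun_prop)]

lemma mulConv_null {ν ρ : Measure ℝ} [SFinite ν] (hν : ν (Iic 0) = 0) (hρ : ρ (Iic 0) = 0) :
    mulConv ν ρ (Iic 0) = 0 := by
  rw [← lintegral_indicator_one measurableSet_Iic,
    lintegral_mulConv ν ρ (measurable_one.indicator measurableSet_Iic),
    lintegral_eq_zero_of_ae_eq_zero]
  filter_upwards [ae_pos_of_null hρ] with x hx
  refine lintegral_eq_zero_of_ae_eq_zero ?_
  filter_upwards [ae_pos_of_null hν] with y hy
  simp [mul_pos hx hy]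

/-- In logarithmic coordinates, multiplicative convolution is additive convolution, since
`y ↦ y ^ α` is multiplicative. -/
lemma logTilt_mulConv (α : ℝ) {ν ρ : Measure ℝ} [SFinite ν] (hν : ν (Iic 0) = 0)
    (hρ : ρ (Iic 0) = 0) :
    logTilt α (mulConv ν ρ) = logTilt α ρ ∗ logTilt α ν := by
  refine Measure.ext_of_lintegral _ fun f hf => ?_
  rw [lintegral_logTilt _ _ hf, lintegral_mulConv _ _ (by fun_prop), Measure.lintegral_conv hf,
    lintegral_logTilt _ _ (Measurable.lintegral_prod_right' (f := fun p : ℝ × ℝ => f (p.1 + p.2))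
      (by fun_prop))]
  refine lintegral_congr_ae ?_
  filter_upwards [ae_pos_of_null hρ] with x hx
  rw [lintegral_logTilt _ _ (by fun_prop), ← lintegral_const_mul _ (by fun_prop)]
  refine lintegral_congr_ae ?_
  filter_upwards [ae_pos_of_null hν] with y hy
  rw [Real.log_mul hx.ne' hy.ne', Real.mul_rpow hx.le hy.le, ENNReal.ofReal_mul (by positivity),
    mul_assoc]

lemma nuAlpha_null (α : ℝ) : nuAlpha α (Iic 0) = 0 := by
  refine withDensity_absolutelyContinuous _ _ ?_
  rw [Measure.restrict_apply measurableSet_Iic, inter_comm, Ioi_inter_Iic, Ioc_self, measure_empty]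

/-- The constant density of `logTilt α (nuAlpha α)`. -/
def nuConst (α : ℝ) : ℝ := if α = 0 then 1 else |α|

lemma nuConst_pos (α : ℝ) : 0 < nuConst α := by
  unfold nuConst; split_ifs with h
  · exact one_pos
  · exact abs_pos.2 h

lemma measurable_nuDensity (α : ℝ) : Measurable fun x : ℝ =>
    ENNReal.ofReal (if α = 0 then x⁻¹ else |α| * x ^ (-(α + 1))) := by
  split_ifs <;> fun_prop

instance (α : ℝ) : SigmaFinite (nuAlpha α) := by
  unfold nuAlpha
  exact SigmaFinite.withDensity_of_ne_top (by simp)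

lemma lintegral_Ioi_eq_exp {F : ℝ → ℝ≥0∞} :
    ∫⁻ y in Ioi (0:ℝ), F y = ∫⁻ s, ENNReal.ofReal (Real.exp s) * F (Real.exp s) := by
  have := lintegral_image_eq_lintegral_abs_deriv_mul (s := univ) (f := Real.exp) (f' := Real.exp)
    MeasurableSet.univ (fun x _ => (Real.hasDerivAt_exp x).hasDerivWithinAt)
    Real.exp_injective.injOn F
  rw [image_univ, Real.range_exp] at this
  simpa using this

/-- In logarithmic coordinates `ν_α` is a multiple of Lebesgue measure. -/
lemma logTilt_nuAlpha (α : ℝ) :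
    logTilt α (nuAlpha α) = ENNReal.ofReal (nuConst α) • volume := by
  refine Measure.ext_of_lintegral _ fun f hf => ?_
  rw [lintegral_logTilt _ _ hf, nuAlpha, lintegral_withDensity_eq_lintegral_mul _
    (measurable_nuDensity α) (by fun_prop), lintegral_Ioi_eq_exp, lintegral_smul_measure,
    smul_eq_mul, ← lintegral_const_mul _ hf]
  refine lintegral_congr fun s => ?_
  simp only [Pi.mul_apply, Real.log_exp]
  rw [← mul_assoc, ← mul_assoc, ← ENNReal.ofReal_mul (by positivity),
    ← ENNReal.ofReal_mul (by split_ifs <;> positivity)]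
  congr 2
  unfold nuConst
  split_ifs with h
  · subst h
    simp
  · have : Real.exp s * Real.exp s ^ (-(α + 1)) * Real.exp s ^ α = 1 := by
      rw [← Real.exp_mul, ← Real.exp_mul, ← Real.exp_add, ← Real.exp_add]
      simp only [Real.exp_eq_one_iff]
      ring
    linear_combination |α| * this

/-! ### Cancellation on the additive group -/

open scoped FourierTransform ContDiff

/-- Division by the nonvanishing smooth function `charFun σ`: the Fourier transform of a test
function `φ` is the correlation with `σ` of an integrable function, namely of the Fourier transform
of `ξ ↦ φ ξ / charFun σ (-2πξ)`. The moments of `σ` beyond its finite mass are needed only here,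
for the smoothness of `charFun σ`. -/
lemma exists_correlation_eq_fourier (σ : Measure ℝ) [IsFiniteMeasure σ]
    (hmom : ∀ k : ℕ, MemLp id k σ) (hne : ∀ t, charFun σ t ≠ 0)
    {φ : ℝ → ℂ} (hφ : ContDiff ℝ ∞ φ) (hc : HasCompactSupport φ) :
    ∃ ψ : ℝ → ℂ, Continuous ψ ∧ Integrable ψ ∧ ∀ x, ∫ y, ψ (y + x) ∂σ = 𝓕 φ x := by
  set h : ℝ → ℂ := fun ξ => charFun σ (-(2 * Real.pi) * ξ) with hh
  have hsm : ContDiff ℝ ∞ h := (contDiff_charFun' (n := ⊤) hmom).comp (by fun_prop)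
  set Ψ : ℝ → ℂ := fun ξ => φ ξ * (h ξ)⁻¹ with hΨ
  have hΨs : ContDiff ℝ ∞ Ψ := hφ.mul (hsm.inv fun x => hne _)
  have hΨc : HasCompactSupport Ψ :=
    hc.mul_right (f' := fun ξ => (h ξ)⁻¹)
  let S := hΨc.toSchwartzMap hΨs
  have hS : (S : ℝ → ℂ) = Ψ := rfl
  have hΨi : Integrable Ψ := hΨs.continuous.integrable_of_hasCompactSupport hΨc
  refine ⟨𝓕 Ψ, ?_, ?_, fun x => ?_⟩
  · rw [← hS, ← SchwartzMap.fourier_coe]; exact (𝓕 S).continuous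
  · rw [← hS, ← SchwartzMap.fourier_coe]; exact (𝓕 S).integrable
  · simp_rw [Real.fourier_real_eq_integral_exp_smul]
    rw [integral_integral_swap]
    · refine integral_congr_ae (.of_forall fun ξ => ?_)
      have e : ∀ y : ℝ, Complex.exp (↑(-2 * Real.pi * ξ * (y + x)) * Complex.I) • Ψ ξ
          = Complex.exp (↑(-(2 * Real.pi) * ξ) * y * Complex.I) *
            (Complex.exp (↑(-2 * Real.pi * ξ * x) * Complex.I) * Ψ ξ) := fun y => by
        rw [smul_eq_mul, ← mul_assoc (Complex.exp _) (Complex.exp _), ← Complex.exp_add]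
        congr 2
        push_cast; ring
      simp only [e]
      rw [integral_mul_const, ← charFun_apply_real, smul_eq_mul]
      have : h ξ ≠ 0 := hne _
      change h ξ * (_ * (φ ξ * (h ξ)⁻¹)) = _ * φ ξ
      field_simp
    · have h1 : Integrable (fun p : ℝ × ℝ => Ψ p.2) (σ.prod volume) := hΨi.comp_snd σ
      refine h1.mono (Continuous.aestronglyMeasurable ?_) (.of_forall fun p => ?_)
      · have := hΨs.continuous
        simp only [Function.uncurry_def]
        fun_prop
      · simp only [Function.uncurry_def, norm_smul, Complex.norm_exp_ofReal_mul_I, one_mul, le_refl]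

lemma integrable_and_integral_of_conv {σ μ m : Measure ℝ} [SFinite σ] [SFinite μ]
    (h : σ ∗ μ = m) {ψ g : ℝ → ℂ} (hψc : Continuous ψ) (hψ : Integrable ψ m)
    (hg : ∀ x, ∫ y, ψ (y + x) ∂σ = g x) :
    Integrable g μ ∧ ∫ x, g x ∂μ = ∫ z, ψ z ∂m := by
  rw [← h, Measure.conv] at hψ ⊢
  have hm : AEMeasurable (fun p : ℝ × ℝ => p.1 + p.2) (σ.prod μ) := by fun_prop
  have hi : Integrable (fun p : ℝ × ℝ => ψ (p.1 + p.2)) (σ.prod μ) := hψ.comp_aemeasurable hm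
  have hgx : g = fun x => ∫ y, ψ (y + x) ∂σ := funext fun x => (hg x).symm
  rw [hgx]
  refine ⟨hi.integral_prod_right, ?_⟩
  rw [integral_map hm hψc.aestronglyMeasurable, integral_prod_symm _ hi]

/-- Two measures with the same convolution with `σ`, a multiple of Lebesgue measure, have the same
integrals of Fourier transforms of test functions. -/
lemma integral_fourier_eq (σ : Measure ℝ) [IsFiniteMeasure σ]
    (hmom : ∀ k : ℕ, MemLp id k σ) (hne : ∀ t, charFun σ t ≠ 0)
    {μ₁ μ₂ : Measure ℝ} [SFinite μ₁] [SFinite μ₂] {C : ℝ≥0∞} (hC : C ≠ ⊤)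
    (h₁ : σ ∗ μ₁ = C • volume) (h₂ : σ ∗ μ₂ = C • volume)
    {φ : ℝ → ℂ} (hφ : ContDiff ℝ ∞ φ) (hc : HasCompactSupport φ) :
    Integrable (𝓕 φ) μ₁ ∧ Integrable (𝓕 φ) μ₂ ∧ ∫ x, 𝓕 φ x ∂μ₁ = ∫ x, 𝓕 φ x ∂μ₂ := by
  obtain ⟨ψ, hψc, hψi, hψ⟩ := exists_correlation_eq_fourier σ hmom hne hφ hc
  obtain ⟨a₁, b₁⟩ := integrable_and_integral_of_conv h₁ hψc (hψi.smul_measure hC) hψ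
  obtain ⟨a₂, b₂⟩ := integrable_and_integral_of_conv h₂ hψc (hψi.smul_measure hC) hψ
  exact ⟨a₁, a₂, b₁.trans b₂.symm⟩

/-- A Fourier transform which is real-valued and positive on a prescribed bounded interval: take an
even bump function supported so close to `0` that the cosine in its transform stays positive. -/
lemma exists_fourier_pos (n : ℕ) : ∃ φ : ℝ → ℂ, ContDiff ℝ ∞ φ ∧ HasCompactSupport φ ∧
    ∃ g : ℝ → ℝ, Continuous g ∧ (∀ x, 𝓕 φ x = g x) ∧ ∀ x ∈ Ioo (-(n : ℝ)) n, 0 < g x := by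
  have hr : (0:ℝ) < 1 / (8 * (n + 1)) := by positivity
  let b : ContDiffBump (0:ℝ) :=
    ⟨1 / (8 * (n + 1)) / 2, 1 / (8 * (n + 1)), by positivity, by linarith⟩
  have hb : b.rOut = 1 / (8 * (n + 1)) := rfl
  have hbi : Integrable b := b.continuous.integrable_of_hasCompactSupport b.hasCompactSupport
  have hint : ∀ x : ℝ, Integrable fun ξ => Real.cos (2 * Real.pi * ξ * x) * b ξ := fun x =>
    Continuous.integrable_of_hasCompactSupport (by have := b.continuous; fun_prop)
      b.hasCompactSupport.mul_left
  have hints : ∀ x : ℝ, Integrable fun ξ => Real.sin (2 * Real.pi * ξ * x) * b ξ := fun x =>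
    Continuous.integrable_of_hasCompactSupport (by have := b.continuous; fun_prop)
      b.hasCompactSupport.mul_left
  refine ⟨fun ξ => (b ξ : ℂ), Complex.ofRealCLM.contDiff.comp b.contDiff,
    b.hasCompactSupport.comp_left (g := Complex.ofReal) (by simp),
    fun x => ∫ ξ, Real.cos (2 * Real.pi * ξ * x) * b ξ, ?_, fun x => ?_, fun x hx => ?_⟩
  · refine continuous_of_dominated (bound := fun ξ => b ξ) (fun x => (hint x).1)
      (fun x => .of_forall fun ξ => ?_) hbi (.of_forall fun ξ => by fun_prop)
    rw [norm_mul, Real.norm_eq_abs, Real.norm_of_nonneg b.nonneg]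
    exact mul_le_of_le_one_left b.nonneg (Real.abs_cos_le_one _)
  · -- The sine part vanishes because the bump is even.
    have hodd : ∫ ξ, Real.sin (2 * Real.pi * ξ * x) * b ξ = 0 := by
      have := integral_neg_eq_self (fun ξ => Real.sin (2 * Real.pi * ξ * x) * b ξ) volume
      simp only [b.neg, mul_neg, neg_mul, Real.sin_neg, integral_neg] at this
      linarith
    rw [Real.fourier_real_eq_integral_exp_smul]
    have e : ∀ ξ : ℝ, Complex.exp (↑(-2 * Real.pi * ξ * x) * Complex.I) • (b ξ : ℂ) =
        ((Real.cos (2 * Real.pi * ξ * x) * b ξ : ℝ) : ℂ) -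
          ((Real.sin (2 * Real.pi * ξ * x) * b ξ : ℝ) : ℂ) * Complex.I := fun ξ => by
      rw [Complex.exp_mul_I, ← Complex.ofReal_cos, ← Complex.ofReal_sin]
      have : -2 * Real.pi * ξ * x = -(2 * Real.pi * ξ * x) := by ring
      rw [this, Real.cos_neg, Real.sin_neg, smul_eq_mul]
      push_cast; ring
    simp_rw [e]
    rw [integral_sub (hint x).ofReal ((hints x).ofReal.mul_const _), integral_mul_const,
      integral_complex_ofReal, integral_complex_ofReal, hodd]
    simp
  · have hcos : ∀ ξ ∈ Metric.ball (0:ℝ) b.rOut, 0 < Real.cos (2 * Real.pi * ξ * x) := by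
      intro ξ hξ
      rw [Metric.mem_ball, dist_zero_right, Real.norm_eq_abs, hb] at hξ
      have hx' : |x| ≤ n := abs_le.2 ⟨hx.1.le, hx.2.le⟩
      have h1 : |ξ| * |x| ≤ 1 / 8 := by
        calc |ξ| * |x| ≤ 1 / (8 * (n + 1)) * n := by gcongr
          _ ≤ 1 / 8 := by
            rw [div_mul_eq_mul_div, div_le_div_iff₀ (by positivity) (by positivity)]
            linarith
      rw [← abs_mul, abs_le] at h1
      refine Real.cos_pos_of_mem_Ioo ⟨?_, ?_⟩ <;> nlinarith [Real.pi_pos, h1.1, h1.2]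
    refine (integral_pos_iff_support_of_nonneg (fun ξ => ?_) (hint x)).2 ?_
    · by_cases hξ : ξ ∈ Metric.ball (0:ℝ) b.rOut
      · exact mul_nonneg (hcos ξ hξ).le b.nonneg
      · have : b ξ = 0 := by rw [← Function.notMem_support, b.support_eq]; exact hξ
        simp [this]
    · refine lt_of_lt_of_le ?_ (measure_mono (s := Metric.ball (0:ℝ) b.rOut) fun ξ hξ => ?_)
      · exact Metric.measure_ball_pos _ _ b.rOut_pos
      · exact (mul_pos (hcos ξ hξ) (b.pos_of_mem_ball hξ)).ne'

lemma fourier_modulate (φ : ℝ → ℂ) (a x : ℝ) :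
    𝓕 (fun ξ => φ (ξ + a)) x = Complex.exp (↑(2 * Real.pi * a) * x * Complex.I) * 𝓕 φ x := by
  rw [Real.fourier_real_eq_integral_exp_smul, Real.fourier_real_eq_integral_exp_smul,
    ← integral_const_mul,
    ← integral_add_right_eq_self (fun ξ : ℝ => Complex.exp (↑(2 * Real.pi * a) * x * Complex.I) *
      Complex.exp (↑(-2 * Real.pi * ξ * x) * Complex.I) • φ ξ) a]
  refine integral_congr_ae (.of_forall fun ξ => ?_)
  simp only [smul_eq_mul]
  rw [← mul_assoc, ← Complex.exp_add]
  congr 2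
  push_cast; ring

/-- The uniqueness step. All modulations of a real Fourier transform `g` of a test function have
equal integrals against `μ₁` and `μ₂`; sorting the positive and negative parts of `g` turns this
into equality of the characteristic functions of two finite positive measures. -/
lemma withDensity_add_eq {μ₁ μ₂ : Measure ℝ} {g : ℝ → ℝ} (hg : Measurable g)
    (hi₁ : Integrable g μ₁) (hi₂ : Integrable g μ₂)
    (h : ∀ t : ℝ, ∫ x, Complex.exp (t * x * Complex.I) * (g x : ℂ) ∂μ₁ =
      ∫ x, Complex.exp (t * x * Complex.I) * (g x : ℂ) ∂μ₂) :
    μ₁.withDensity (fun x => ENNReal.ofReal (g x)) + μ₂.withDensity (fun x => ENNReal.ofReal (-g x))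
      = μ₂.withDensity (fun x => ENNReal.ofReal (g x)) +
        μ₁.withDensity (fun x => ENNReal.ofReal (-g x)) := by
  have fin : ∀ {μ : Measure ℝ} {k : ℝ → ℝ}, Integrable k μ →
      IsFiniteMeasure (μ.withDensity fun x => ENNReal.ofReal (k x)) := fun hk =>
    isFiniteMeasure_withDensity_ofReal hk.2
  have := fin hi₁; have := fin hi₂
  have : IsFiniteMeasure (μ₁.withDensity fun x => ENNReal.ofReal (-g x)) := fin hi₁.neg
  have : IsFiniteMeasure (μ₂.withDensity fun x => ENNReal.ofReal (-g x)) := fin hi₂.neg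
  have hbd : ∀ (m : Measure ℝ) [IsFiniteMeasure m] (t : ℝ),
      Integrable (fun x : ℝ => Complex.exp (t * x * Complex.I)) m := fun m _ t =>
    (integrable_const (1:ℝ)).mono' (Continuous.aestronglyMeasurable (by fun_prop))
      (.of_forall fun x => by
        rw [← Complex.ofReal_mul, Complex.norm_exp_ofReal_mul_I])
  have hkm : ∀ {μ : Measure ℝ} {k : ℝ → ℝ}, Measurable k → ∀ t : ℝ,
      ∫ x : ℝ, Complex.exp (t * x * Complex.I) ∂(μ.withDensity fun x => ENNReal.ofReal (k x)) =
        ∫ x, ((max (k x) 0 : ℝ) : ℂ) * Complex.exp (t * x * Complex.I) ∂μ := fun hk t => by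
    rw [integral_withDensity_eq_integral_toReal_smul (by fun_prop) (by simp)]
    simp [ENNReal.toReal_ofReal']
  have hint : ∀ {μ : Measure ℝ} {k : ℝ → ℝ}, Integrable k μ → ∀ t : ℝ,
      Integrable (fun x => ((max (k x) 0 : ℝ) : ℂ) * Complex.exp (t * x * Complex.I)) μ := by
    intro μ k hk t
    refine hk.norm.mono' ?_ (.of_forall fun x => ?_)
    · exact (Complex.continuous_ofReal.comp_aestronglyMeasurable
        (hk.1.sup aestronglyMeasurable_const)).mul
        (Continuous.aestronglyMeasurable (by fun_prop))
    · rw [norm_mul, ← Complex.ofReal_mul, Complex.norm_exp_ofReal_mul_I, mul_one,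
        Complex.norm_real, Real.norm_of_nonneg (le_max_right _ _), Real.norm_eq_abs]
      exact max_le (le_abs_self _) (abs_nonneg _)
  have hsplit : ∀ {μ : Measure ℝ}, Integrable g μ → ∀ t : ℝ,
      ∫ x, Complex.exp (t * x * Complex.I) * (g x : ℂ) ∂μ =
        ∫ x, ((max (g x) 0 : ℝ) : ℂ) * Complex.exp (t * x * Complex.I) ∂μ -
        ∫ x, ((max (-g x) 0 : ℝ) : ℂ) * Complex.exp (t * x * Complex.I) ∂μ := by
    intro μ hi t
    rw [← integral_sub (hint hi t) (hint (k := fun x => -g x) hi.neg t)]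
    refine integral_congr_ae (.of_forall fun x => ?_)
    have : g x = max (g x) 0 - max (-g x) 0 := by
      rcases le_total (g x) 0 with h0 | h0
      · rw [max_eq_right h0, max_eq_left (by linarith)]; ring
      · rw [max_eq_left h0, max_eq_right (by linarith)]; ring
    simp only
    rw [← sub_mul, ← Complex.ofReal_sub, ← this, mul_comm]
  refine Measure.ext_of_charFun (funext fun t => ?_)
  rw [charFun_apply_real, charFun_apply_real, integral_add_measure (hbd _ t) (hbd _ t),
    integral_add_measure (hbd _ t) (hbd _ t), hkm hg, hkm hg, hkm (k := fun x => -g x) hg.neg,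
    hkm (k := fun x => -g x) hg.neg]
  have := h t
  rw [hsplit hi₁, hsplit hi₂] at this
  linear_combination this

lemma restrict_eq_of_withDensity_add_eq {μ₁ μ₂ : Measure ℝ} {g : ℝ → ℝ} (hg : Measurable g)
    {s : Set ℝ} (hs : MeasurableSet s) (hpos : ∀ x ∈ s, 0 < g x)
    (h : μ₁.withDensity (fun x => ENNReal.ofReal (g x)) +
        μ₂.withDensity (fun x => ENNReal.ofReal (-g x))
      = μ₂.withDensity (fun x => ENNReal.ofReal (g x)) +
        μ₁.withDensity (fun x => ENNReal.ofReal (-g x))) :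
    μ₁.restrict s = μ₂.restrict s := by
  have key : ∀ (μ μ' : Measure ℝ) {F : ℝ → ℝ≥0∞}, Measurable F →
      ∫⁻ x, F x ∂(μ.restrict s) = ∫⁻ x, s.indicator (fun x => F x * ENNReal.ofReal (g x)⁻¹) x
        ∂(μ.withDensity (fun x => ENNReal.ofReal (g x)) +
          μ'.withDensity (fun x => ENNReal.ofReal (-g x))) := by
    intro μ μ' F hF
    have hm : Measurable (s.indicator fun x => F x * ENNReal.ofReal (g x)⁻¹) :=
      Measurable.indicator (by fun_prop) hs
    rw [lintegral_add_measure, lintegral_withDensity_eq_lintegral_mul _ (by fun_prop) hm,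
      lintegral_withDensity_eq_lintegral_mul _ (by fun_prop) hm]
    have h0 : (∫⁻ x, ((fun x => ENNReal.ofReal (-g x)) *
        s.indicator fun x => F x * ENNReal.ofReal (g x)⁻¹) x ∂μ') = 0 := by
      refine lintegral_eq_zero_of_ae_eq_zero (.of_forall fun x => ?_)
      by_cases hx : x ∈ s
      · simp [hx, ENNReal.ofReal_of_nonpos (neg_nonpos.2 (hpos x hx).le)]
      · simp [hx]
    rw [h0, add_zero, ← lintegral_indicator hs]
    refine lintegral_congr fun x => ?_
    by_cases hx : x ∈ s
    · have := hpos x hx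
      simp only [hx, indicator_of_mem, Pi.mul_apply]
      rw [mul_left_comm, ← ENNReal.ofReal_mul this.le, mul_inv_cancel₀ this.ne']
      simp
    · simp [hx]
  refine Measure.ext_of_lintegral _ fun F hF => ?_
  rw [key μ₁ μ₂ hF, key μ₂ μ₁ hF, h]

/-- Cancellation on the additive group `ℝ`. -/
theorem eq_of_conv_eq (σ : Measure ℝ) [IsFiniteMeasure σ]
    (hmom : ∀ k : ℕ, MemLp id k σ) (hne : ∀ t, charFun σ t ≠ 0)
    {μ₁ μ₂ : Measure ℝ} [SFinite μ₁] [SFinite μ₂] {C : ℝ≥0∞} (hC : C ≠ ⊤)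
    (h₁ : σ ∗ μ₁ = C • volume) (h₂ : σ ∗ μ₂ = C • volume) : μ₁ = μ₂ := by
  have hcover : ⋃ n : ℕ, Ioo (-(n : ℝ)) n = univ := by
    refine eq_univ_of_forall fun x => mem_iUnion.2 ?_
    obtain ⟨n, hn⟩ := exists_nat_gt |x|
    exact ⟨n, abs_lt.1 hn⟩
  refine (Measure.ext_iff_of_iUnion_eq_univ hcover).2 fun n => ?_
  obtain ⟨φ, hφ, hc, g, hgc, hg, hpos⟩ := exists_fourier_pos n
  have hφg : 𝓕 φ = fun x => (g x : ℂ) := funext hg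
  have base := integral_fourier_eq σ hmom hne hC h₁ h₂ hφ hc
  rw [hφg] at base
  have re : ∀ {μ : Measure ℝ}, Integrable (fun x => (g x : ℂ)) μ → Integrable g μ := fun hi => by
    simpa using hi.re
  refine restrict_eq_of_withDensity_add_eq hgc.measurable measurableSet_Ioo hpos
    (withDensity_add_eq hgc.measurable (re base.1) (re base.2.1) fun t => ?_)
  -- Modulation by `t` is the Fourier image of translation by `t / 2π`.
  have := (integral_fourier_eq σ hmom hne hC h₁ h₂
    (φ := fun ξ => φ (ξ + t / (2 * Real.pi))) (hφ.comp (by fun_prop))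
    (hc.comp_homeomorph (Homeomorph.addRight _))).2.2
  simp_rw [fourier_modulate, hφg] at this
  have e : 2 * Real.pi * (t / (2 * Real.pi)) = t := by
    field_simp
  simpa only [e] using this

/-! ### Moments and characteristic function of `logTilt α ρ` -/

lemma restrict_Ioi_of_null {μ : Measure ℝ} (h : μ (Iic 0) = 0) : μ.restrict (Ioi 0) = μ :=
  Measure.restrict_eq_self_of_ae_mem (ae_pos_of_null h)

lemma lintegral_exp_abs_logTilt {α δ : ℝ} {ρ : Measure ℝ} (hsupp : ρ (Iic 0) = 0)
    (hm : MomentCond ρ α δ) :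
    ∫⁻ s, ENNReal.ofReal (Real.exp (δ * |s|)) ∂(logTilt α ρ) < ⊤ := by
  rw [lintegral_logTilt _ _ (by fun_prop)]
  rw [MomentCond, restrict_Ioi_of_null hsupp] at hm
  refine lt_of_le_of_lt (lintegral_mono_ae ?_) hm
  filter_upwards [ae_pos_of_null hsupp] with y hy
  rw [← ENNReal.ofReal_mul (by positivity)]
  refine ENNReal.ofReal_le_ofReal ?_
  simp only [Real.rpow_def_of_pos hy, ← Real.exp_add]
  rcases le_total 0 (Real.log y) with h | h
  · refine le_max_of_le_right (le_of_eq ?_)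
    rw [abs_of_nonneg h]; ring_nf
  · refine le_max_of_le_left (le_of_eq ?_)
    rw [abs_of_nonpos h]; ring_nf

lemma isFiniteMeasure_logTilt {α δ : ℝ} (hδ : 0 < δ) {ρ : Measure ℝ} (hsupp : ρ (Iic 0) = 0)
    (hm : MomentCond ρ α δ) : IsFiniteMeasure (logTilt α ρ) := by
  refine ⟨lt_of_le_of_lt ?_ (lintegral_exp_abs_logTilt hsupp hm)⟩
  rw [← lintegral_one]
  refine lintegral_mono fun s => ?_
  rw [← ENNReal.ofReal_one]
  exact ENNReal.ofReal_le_ofReal (Real.one_le_exp (by positivity))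

lemma memLp_logTilt {α δ : ℝ} (hδ : 0 < δ) {ρ : Measure ℝ} (hsupp : ρ (Iic 0) = 0)
    (hm : MomentCond ρ α δ) (k : ℕ) : MemLp id k (logTilt α ρ) := by
  have hexp : Integrable (fun s => Real.exp (δ * |s|)) (logTilt α ρ) := by
    refine ⟨Continuous.aestronglyMeasurable (by fun_prop), ?_⟩
    rw [hasFiniteIntegral_iff_ofReal (.of_forall fun s => (Real.exp_pos _).le)]
    exact lintegral_exp_abs_logTilt hsupp hm
  refine memLp_of_mem_interior_integrableExpSet (mem_interior.2
    ⟨Ioo (-δ) δ, fun t ht => ?_, isOpen_Ioo, by simpa using hδ⟩) k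
  refine hexp.mono' (Continuous.aestronglyMeasurable (by fun_prop)) (.of_forall fun s => ?_)
  rw [Real.norm_of_nonneg (Real.exp_pos _).le]
  refine Real.exp_le_exp.2 ((le_abs_self _).trans ?_)
  rw [id, abs_mul]
  exact mul_le_mul_of_nonneg_right (abs_le.2 ⟨ht.1.le, ht.2.le⟩) (abs_nonneg _)

/-- The Mellin transform of `ρ` on the line with real part `α` is the characteristic function of
`logTilt α ρ`. -/
lemma mellin_eq_charFun (α θ : ℝ) {ρ : Measure ℝ} (hsupp : ρ (Iic 0) = 0) :
    ∫ y in Ioi (0:ℝ), (y : ℂ) ^ ((α : ℂ) + (θ : ℂ) * Complex.I) ∂ρ = charFun (logTilt α ρ) θ := by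
  rw [restrict_Ioi_of_null hsupp, charFun_apply_real, logTilt,
    integral_map Real.measurable_log.aemeasurable
      (Continuous.aestronglyMeasurable (by fun_prop)),
    integral_withDensity_eq_integral_toReal_smul (measurable_tilt α) (by simp)]
  refine integral_congr_ae ?_
  filter_upwards [ae_pos_of_null hsupp] with y hy
  rw [ENNReal.toReal_ofReal (by positivity), Complex.cpow_def_of_ne_zero
    (Complex.ofReal_ne_zero.2 hy.ne'), Real.rpow_def_of_pos hy, Complex.real_smul,
    Complex.ofReal_exp, ← Complex.exp_add]
  congr 1
  push_cast
  rw [Complex.ofReal_log hy.le]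
  ring

/-! ### Necessity of nonvanishing -/

/-- Tonelli and translation invariance: the convolution of `σ` with a density is the density
`z ↦ ∫ w (z - x) σ(dx)`. -/
lemma conv_withDensity (σ : Measure ℝ) [SFinite σ] (C : ℝ≥0∞) {w : ℝ → ℝ≥0∞} (hw : Measurable w) :
    σ ∗ (C • volume.withDensity w) = C • volume.withDensity fun z => ∫⁻ x, w (z - x) ∂σ := by
  refine Measure.ext_of_lintegral _ fun f hf => ?_
  have hm : Measurable fun z => ∫⁻ x, w (z - x) ∂σ :=
    Measurable.lintegral_prod_right' (f := fun p : ℝ × ℝ => w (p.1 - p.2)) (by fun_prop)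
  rw [Measure.lintegral_conv hf, lintegral_smul_measure,
    lintegral_withDensity_eq_lintegral_mul _ hm hf]
  have e : ∀ x, ∫⁻ y, f (x + y) ∂(C • volume.withDensity w) =
      C * ∫⁻ z, w (z - x) * f z := fun x => by
    rw [lintegral_smul_measure, lintegral_withDensity_eq_lintegral_mul _ hw (by fun_prop),
      ← lintegral_add_right_eq_self (fun z => w (z - x) * f z) x]
    simp [add_comm]
  simp_rw [e]
  rw [lintegral_const_mul _ (Measurable.lintegral_prod_right'
      (f := fun p : ℝ × ℝ => w (p.2 - p.1) * f p.2) (by fun_prop)),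
    lintegral_lintegral_swap (by fun_prop), smul_eq_mul]
  congr 1
  refine lintegral_congr fun z => ?_
  exact lintegral_mul_const (f z) (f := fun x => w (z - x)) (by fun_prop)

lemma conv_volume (σ : Measure ℝ) [SFinite σ] (C : ℝ≥0∞) :
    σ ∗ (C • volume) = (C * σ univ) • volume := by
  have := conv_withDensity σ C (w := 1) measurable_one
  simpa [withDensity_one, withDensity_const, smul_smul] using this

/-- The oscillating perturbation `1 + cos (θ t)` of Lebesgue density. -/
def oscDensity (θ t : ℝ) : ℝ≥0∞ := ENNReal.ofReal (1 + Real.cos (θ * t))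

lemma measurable_oscDensity (θ : ℝ) : Measurable (oscDensity θ) := by
  unfold oscDensity; fun_prop

/-- A zero of `charFun σ` at `θ` makes convolution with `σ` annihilate the oscillation
`cos (θ t)`. -/
lemma lintegral_oscDensity (σ : Measure ℝ) [IsFiniteMeasure σ] {θ : ℝ} (h : charFun σ θ = 0)
    (z : ℝ) : ∫⁻ x, oscDensity θ (z - x) ∂σ = σ univ := by
  have hE : Integrable (fun x : ℝ => Complex.exp (θ * x * Complex.I)) σ :=
    (integrable_const (1:ℝ)).mono' (Continuous.aestronglyMeasurable (by fun_prop))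
      (.of_forall fun x => by rw [← Complex.ofReal_mul, Complex.norm_exp_ofReal_mul_I])
  -- `cos (θ (z - x))` is the real part of `exp (-i θ z) * exp (i θ x)`.
  have hcos : ∀ x : ℝ, Real.cos (θ * (z - x)) =
      (Complex.exp (↑(-(θ * z)) * Complex.I) * Complex.exp (θ * x * Complex.I)).re := fun x => by
    rw [← Complex.exp_add, ← add_mul, ← Complex.ofReal_mul, ← Complex.ofReal_add,
      Complex.exp_ofReal_mul_I_re, ← Real.cos_neg]
    ring_nf
  have hci : Integrable (fun x => Real.cos (θ * (z - x))) σ := by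
    simp_rw [hcos]; exact (hE.const_mul _).re
  have hc0 : ∫ x, Real.cos (θ * (z - x)) ∂σ = 0 := by
    simp_rw [hcos]
    have := integral_re (hE.const_mul (Complex.exp (↑(-(θ * z)) * Complex.I)))
    rw [integral_const_mul, ← charFun_apply_real, h] at this
    simpa using this
  change ∫⁻ x, ENNReal.ofReal (((fun _ => 1 : ℝ → ℝ) + fun x => Real.cos (θ * (z - x))) x) ∂σ = _
  rw [← ofReal_integral_eq_lintegral_ofReal ((integrable_const 1).add hci)
    (.of_forall fun x => by
      change 0 ≤ 1 + Real.cos (θ * (z - x))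
      linarith [Real.neg_one_le_cos (θ * (z - x))]), integral_add' (integrable_const 1) hci, hc0]
  simp

lemma logTilt_withDensity (α : ℝ) (μ : Measure ℝ) {w : ℝ → ℝ≥0∞} (hw : Measurable w) :
    logTilt α (μ.withDensity fun y => w (Real.log y)) = (logTilt α μ).withDensity w := by
  refine Measure.ext_of_lintegral _ fun f hf => ?_
  have hwl : Measurable fun y => w (Real.log y) := by fun_prop
  rw [lintegral_logTilt _ _ hf, lintegral_withDensity_eq_lintegral_mul _ hwl (by fun_prop),
    lintegral_withDensity_eq_lintegral_mul _ hw hf, lintegral_logTilt _ _ (by fun_prop)]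
  refine lintegral_congr fun y => ?_
  simp only [Pi.mul_apply]
  ring

/-- Nonvanishing is necessary: a zero at `θ` lets `ν_α` be perturbed by the oscillation
`cos (θ log y)` without changing its convolution with `ρ`. -/
lemma mellin_ne_zero_of_cancellation {α : ℝ} {ρ : Measure ℝ} [SFinite ρ]
    [IsFiniteMeasure (logTilt α ρ)] (hsupp : ρ (Iic 0) = 0) (hcan : HasCancellation ρ α) (θ : ℝ) :
    charFun (logTilt α ρ) θ ≠ 0 := by
  intro h0
  have hw := measurable_oscDensity θ
  set C := ENNReal.ofReal (nuConst α) with hCdef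
  have hC0 : C ≠ 0 := by simpa [hCdef] using nuConst_pos α
  have hT : logTilt α ((nuAlpha α).withDensity fun y => oscDensity θ (Real.log y)) =
      C • volume.withDensity (oscDensity θ) := by
    rw [logTilt_withDensity α _ hw, logTilt_nuAlpha, withDensity_smul_measure]
  have hnull : (nuAlpha α).withDensity (fun y => oscDensity θ (Real.log y)) (Iic 0) = 0 :=
    withDensity_absolutelyContinuous _ _ (nuAlpha_null α)
  have hsf : SigmaFinite ((nuAlpha α).withDensity fun y => oscDensity θ (Real.log y)) :=
    SigmaFinite.withDensity_of_ne_top (by simp [oscDensity])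
  have heq := hcan _ hsf hnull (logTilt_injective α (mulConv_null hnull hsupp)
    (mulConv_null (nuAlpha_null α) hsupp) (by
      rw [logTilt_mulConv α hnull hsupp, logTilt_mulConv α (nuAlpha_null α) hsupp, hT,
        logTilt_nuAlpha, conv_withDensity _ _ hw, conv_volume]
      simp_rw [lintegral_oscDensity _ h0]
      rw [withDensity_const, smul_smul]))
  rw [heq, logTilt_nuAlpha] at hT
  have h1 : volume.withDensity (1 : ℝ → ℝ≥0∞) = volume.withDensity (oscDensity θ) := by
    rw [withDensity_one]
    have := congrArg (fun m => C⁻¹ • m) hT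
    simpa [smul_smul, ENNReal.inv_mul_cancel hC0 ENNReal.ofReal_ne_top, ← hCdef] using this
  have h2 := (withDensity_eq_iff_of_sigmaFinite aemeasurable_const hw.aemeasurable).1 h1
  have h3 : (1 : ℝ → ℝ≥0∞) = oscDensity θ :=
    (Continuous.ae_eq_iff_eq _ continuous_one
      (ENNReal.continuous_ofReal.comp (by fun_prop : Continuous fun t => 1 + Real.cos (θ * t)))).1 h2
  have h4 := congrFun h3 0
  norm_num [oscDensity] at h4


/-! ### The characterization -/

/-- Theorem 2.1, characterization of the cancellation property.
Let `α ∈ ℝ` and `ρ` a nonzero σ-finite measure on `(0,∞)` with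
`∫₀^∞ (y^{α−δ} ∨ y^{α+δ}) ρ(dy) < ∞` for some `δ > 0`. Then `ρ` has the cancellation
property w.r.t. `{ν_α}` iff `∫₀^∞ y^{α+iθ} ρ(dy) ≠ 0` for all `θ ∈ ℝ`. -/
theorem cancellation_iff_mellin_nonvanishing
    (α : ℝ) (ρ : Measure ℝ) [SigmaFinite ρ] (hρ : ρ ≠ 0) (hsupp : ρ (Iic 0) = 0)
    (hmom : ∃ δ : ℝ, 0 < δ ∧ MomentCond ρ α δ) :
    HasCancellation ρ α ↔ MellinNonvanishing ρ α := by
  obtain ⟨δ, hδ, hm⟩ := hmom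
  have := isFiniteMeasure_logTilt hδ hsupp hm
  have hM : MellinNonvanishing ρ α ↔ ∀ θ, charFun (logTilt α ρ) θ ≠ 0 :=
    forall_congr' fun θ => by rw [mellin_eq_charFun α θ hsupp]
  rw [hM]
  refine ⟨mellin_ne_zero_of_cancellation hsupp, fun hne ν _ hν hconv => ?_⟩
  have h₂ := conv_volume (logTilt α ρ) (ENNReal.ofReal (nuConst α))
  refine logTilt_injective α hν (nuAlpha_null α)
    (eq_of_conv_eq (logTilt α ρ) (memLp_logTilt hδ hsupp hm) hne
      (C := ENNReal.ofReal (nuConst α) * logTilt α ρ univ)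
      (ENNReal.mul_ne_top ENNReal.ofReal_ne_top (measure_ne_top _ _)) ?_ ?_)
  · rw [← logTilt_mulConv α hν hsupp, hconv, logTilt_mulConv α (nuAlpha_null α) hsupp,
      logTilt_nuAlpha, h₂]
  · rw [logTilt_nuAlpha, h₂]
end
end

section
/- Let α ∈ ℝ and let ρ be a nonzero σ-finite measure on (0,∞) such that ∫₀^∞ (y^{α−δ} ∨ y^{α+δ}) ρ(dy) < ∞ for some δ > 0. If ∫₀^∞ y^{α+iθ₀} ρ(dy) = 0 for some θ₀ ∈ ℝ, then for any real numbers a, b with 0 < a² + b² ≤ 1, the σ-finite measure ν(dx) := g(x) ν_α(dx), where g(x) := 1 + a·cos(θ₀ log x) + b·sin(θ₀ log x) for x > 0, satisfies ν⊛ρ = ν_α⊛ρ while ν ≠ ν_α. -/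
/-! `ν_α` is homogeneous: its density `d` satisfies `x⁻¹ d(z / x) = x ^ α d(z)`. Hence, by Tonelli,
for `ν = g ν_α` the convolution `ν ⊛ ρ` has Lebesgue density
`d(z) ∫ x ^ α g(z / x) ρ(dx)` (`mulConv_withDensity`, `densAlpha_scale`). By the addition formulas,
`g(z / x) - 1` is a linear combination of `cos(θ₀ log x)` and `sin(θ₀ log x)` with coefficients
depending on `z` only, and these two functions are the real and imaginary parts of `x ^ (i θ₀)`,
so they integrate to zero against `x ^ α ρ(dx)` (`lintegral_gFun`). The density is thus the same as
for `g = 1`.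

For `ν ≠ ν_α`: equality would force `g = 1` almost everywhere, hence everywhere on `(0,∞)` by
continuity. Since `θ₀ ≠ 0` (`theta_ne_zero`), the phase `θ₀ log x` takes all real values, which
gives `a = b = 0`. -/

open MeasureTheory Set Filter ProbabilityTheory
open scoped ENNReal Topology

noncomputable section

/-! ### The density of `ν_α` -/

/-- The Lebesgue density of `nuAlpha α`, extended by zero to `(-∞, 0]`. -/
def densAlpha (α : ℝ) : ℝ → ℝ≥0∞ :=
  (Ioi (0:ℝ)).indicator fun x =>
    ENNReal.ofReal (if α = 0 then x⁻¹ else |α| * x ^ (-(α + 1)))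

lemma measurable_densAlpha (α : ℝ) : Measurable (densAlpha α) := by
  unfold densAlpha
  refine Measurable.indicator ?_ measurableSet_Ioi
  split_ifs <;> fun_prop

lemma nuAlpha_eq (α : ℝ) : nuAlpha α = volume.withDensity (densAlpha α) := by
  unfold nuAlpha densAlpha
  rw [withDensity_indicator measurableSet_Ioi]

/-- Homogeneity of the density of `nuAlpha α`, the reason why `nuAlpha α` is rescaled by the
factor `x ^ α` under multiplication by `x`. -/
lemma densAlpha_scale (α : ℝ) {x : ℝ} (hx : 0 < x) (z : ℝ) :
    ENNReal.ofReal x⁻¹ * densAlpha α (x⁻¹ * z) = ENNReal.ofReal (x ^ α) * densAlpha α z := by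
  unfold densAlpha
  by_cases hz : 0 < z
  · have h1 : x⁻¹ * z ∈ Ioi (0:ℝ) := by simp only [mem_Ioi]; positivity
    rw [indicator_of_mem h1, indicator_of_mem (show z ∈ Ioi (0:ℝ) from hz),
      ← ENNReal.ofReal_mul (by positivity), ← ENNReal.ofReal_mul (by positivity)]
    congr 1
    split_ifs with h
    · subst h
      simp only [Real.rpow_zero]
      field_simp
    · rw [Real.mul_rpow (by positivity) hz.le, Real.inv_rpow hx.le, Real.rpow_neg hx.le, inv_inv,
        Real.rpow_add hx, Real.rpow_one]
      field_simp
  · have h1 : x⁻¹ * z ∉ Ioi (0:ℝ) := by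
      simp only [mem_Ioi, not_lt]
      exact mul_nonpos_of_nonneg_of_nonpos (by positivity) (not_lt.mp hz)
    rw [indicator_of_notMem h1, indicator_of_notMem (show z ∉ Ioi (0:ℝ) from hz)]
    simp

lemma lintegral_comp_scale (F : ℝ → ℝ≥0∞) (hF : Measurable F) {x : ℝ} (hx : 0 < x) :
    ∫⁻ y, F (x * y) = ENNReal.ofReal x⁻¹ * ∫⁻ z, F z := by
  rw [← lintegral_map hF (by fun_prop : Measurable fun y : ℝ => x * y),
    Real.map_volume_mul_left hx.ne', lintegral_smul_measure, abs_of_pos (by positivity), smul_eq_mul]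

/-- The convolution of an absolutely continuous measure has the density
`z ↦ ∫ x⁻¹ k(z / x) ρ(dx)`. -/
lemma mulConv_withDensity (ρ : Measure ℝ) [SigmaFinite ρ] (hsupp : ρ (Iic 0) = 0)
    (k : ℝ → ℝ≥0∞) (hk : Measurable k) :
    mulConv (volume.withDensity k) ρ = volume.withDensity fun z =>
      ∫⁻ x in Ioi (0:ℝ), ENNReal.ofReal x⁻¹ * k (x⁻¹ * z) ∂ρ := by
  have hres : ρ.restrict (Ioi 0) = ρ := by
    refine Measure.restrict_eq_self_of_ae_mem ?_
    rw [ae_iff]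
    convert hsupp using 2
    ext x; simp
  ext B hB
  unfold mulConv
  rw [Measure.bind_apply hB (measurable_map_mul _).aemeasurable, withDensity_apply _ hB]
  calc ∫⁻ x, ((volume.withDensity k).map fun y => x * y) B ∂ρ
      = ∫⁻ x in Ioi (0:ℝ), ((volume.withDensity k).map fun y => x * y) B ∂ρ := by rw [hres]
    _ = ∫⁻ x in Ioi (0:ℝ), (∫⁻ z in B, ENNReal.ofReal x⁻¹ * k (x⁻¹ * z)) ∂ρ := by
        refine setLIntegral_congr_fun measurableSet_Ioi fun x hx => ?_
        have hx : 0 < x := hx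
        have hm : Measurable fun y : ℝ => x * y := by fun_prop
        rw [Measure.map_apply hm hB, withDensity_apply _ (hm hB), ← lintegral_indicator (hm hB),
          lintegral_const_mul _ (by fun_prop), ← lintegral_indicator hB,
          ← lintegral_comp_scale _ ((by fun_prop : Measurable fun z => k (x⁻¹ * z)).indicator hB) hx]
        refine lintegral_congr fun y => ?_
        by_cases hy : x * y ∈ B
        · rw [indicator_of_mem (show y ∈ (fun y => x * y) ⁻¹' B from hy), indicator_of_mem hy,
            inv_mul_cancel_left₀ hx.ne']
        · rw [indicator_of_notMem (show y ∉ (fun y => x * y) ⁻¹' B from hy),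
            indicator_of_notMem hy]
    _ = _ := by
        rw [lintegral_lintegral_swap]
        have : Measurable fun p : ℝ × ℝ => ENNReal.ofReal p.1⁻¹ * k (p.1⁻¹ * p.2) := by fun_prop
        exact this.aemeasurable

/-! ### The perturbing factor -/

/-- The perturbing factor `g(x) = 1 + a cos(θ log x) + b sin(θ log x)`, the density of `ν` with
respect to `ν_α`. -/
def gFun (θ a b x : ℝ) : ℝ :=
  1 + a * Real.cos (θ * Real.log x) + b * Real.sin (θ * Real.log x)

lemma measurable_gFun (θ a b : ℝ) : Measurable (gFun θ a b) := by
  unfold gFun; fun_prop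

/-- Nonnegativity of `g` is where `a² + b² ≤ 1` enters, through Cauchy–Schwarz. -/
lemma gFun_nonneg {a b : ℝ} (hab : a ^ 2 + b ^ 2 ≤ 1) (θ x : ℝ) : 0 ≤ gFun θ a b x := by
  unfold gFun
  set c := Real.cos (θ * Real.log x)
  set s := Real.sin (θ * Real.log x)
  have h : s ^ 2 + c ^ 2 = 1 := Real.sin_sq_add_cos_sq _
  nlinarith [sq_nonneg (a + c), sq_nonneg (b + s)]

/-! ### The Mellin transform of `ρ` -/

lemma integrable_rpow {ρ : Measure ℝ} {α : ℝ} (hmom : ∃ δ : ℝ, 0 < δ ∧ MomentCond ρ α δ) :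
    IntegrableOn (fun x : ℝ => x ^ α) (Ioi 0) ρ := by
  obtain ⟨δ, hδ, h⟩ := hmom
  refine ⟨(by fun_prop : Measurable fun x : ℝ => x ^ α).aestronglyMeasurable, ?_⟩
  refine lt_of_le_of_lt (setLIntegral_mono' measurableSet_Ioi fun x hx => ?_) h
  have hx : 0 < x := hx
  rw [Real.enorm_of_nonneg (by positivity)]
  refine ENNReal.ofReal_le_ofReal ?_
  rcases le_total 1 x with h1 | h1
  · exact le_max_of_le_right (Real.rpow_le_rpow_of_exponent_le h1 (by linarith))
  · exact le_max_of_le_left (Real.rpow_le_rpow_of_exponent_ge hx h1 (by linarith))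

lemma cpow_mellin {x : ℝ} (hx : 0 < x) (α θ : ℝ) :
    (x : ℂ) ^ ((α : ℂ) + (θ : ℂ) * Complex.I)
      = ((x ^ α * Real.cos (θ * Real.log x) : ℝ) : ℂ)
        + ((x ^ α * Real.sin (θ * Real.log x) : ℝ) : ℂ) * Complex.I := by
  have hx' : (x : ℂ) ≠ 0 := by exact_mod_cast hx.ne'
  rw [Complex.cpow_add _ _ hx', ← Complex.ofReal_cpow hx.le, Complex.cpow_def_of_ne_zero hx',
    ← Complex.ofReal_log hx.le,
    show ((Real.log x : ℝ) : ℂ) * ((θ : ℂ) * Complex.I) = ((θ * Real.log x : ℝ) : ℂ) * Complex.I by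
      push_cast; ring, Complex.exp_mul_I]
  push_cast
  ring

/-- The real and imaginary parts of the vanishing Mellin transform. -/
lemma integral_cos_sin {ρ : Measure ℝ} {α θ : ℝ}
    (hi : IntegrableOn (fun x : ℝ => x ^ α) (Ioi 0) ρ)
    (h0 : (∫ y in Ioi (0:ℝ), (y : ℂ) ^ ((α : ℂ) + (θ : ℂ) * Complex.I) ∂ρ) = 0) :
    (IntegrableOn (fun x : ℝ => x ^ α * Real.cos (θ * Real.log x)) (Ioi 0) ρ ∧
      IntegrableOn (fun x : ℝ => x ^ α * Real.sin (θ * Real.log x)) (Ioi 0) ρ) ∧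
    ∫ x in Ioi (0:ℝ), x ^ α * Real.cos (θ * Real.log x) ∂ρ = 0 ∧
      ∫ x in Ioi (0:ℝ), x ^ α * Real.sin (θ * Real.log x) ∂ρ = 0 := by
  have hc : IntegrableOn (fun x : ℝ => x ^ α * Real.cos (θ * Real.log x)) (Ioi 0) ρ :=
    Integrable.mul_bdd (c := 1) hi (by fun_prop : Measurable _).aestronglyMeasurable
      (Eventually.of_forall fun x => Real.abs_cos_le_one _)
  have hs : IntegrableOn (fun x : ℝ => x ^ α * Real.sin (θ * Real.log x)) (Ioi 0) ρ :=
    Integrable.mul_bdd (c := 1) hi (by fun_prop : Measurable _).aestronglyMeasurable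
      (Eventually.of_forall fun x => Real.abs_sin_le_one _)
  refine ⟨⟨hc, hs⟩, ?_⟩
  rw [setIntegral_congr_fun measurableSet_Ioi (fun x hx => cpow_mellin (mem_Ioi.mp hx) α θ),
    integral_add hc.ofReal (hs.ofReal.mul_const _), integral_mul_const,
    integral_complex_ofReal, integral_complex_ofReal] at h0
  have hre := congrArg Complex.re h0
  have him := congrArg Complex.im h0
  simp at hre him
  exact ⟨hre, him⟩

/-- The perturbation integrates to zero against `x ^ α ρ(dx)` along every dilation: by the
addition formulas `g(z / x) - 1` is a combination of `cos(θ log x)` and `sin(θ log x)`. -/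
lemma lintegral_gFun {ρ : Measure ℝ} {α θ a b : ℝ} (hab1 : a ^ 2 + b ^ 2 ≤ 1)
    (hi : IntegrableOn (fun x : ℝ => x ^ α) (Ioi 0) ρ)
    (h0 : (∫ y in Ioi (0:ℝ), (y : ℂ) ^ ((α : ℂ) + (θ : ℂ) * Complex.I) ∂ρ) = 0)
    {z : ℝ} (hz : 0 < z) :
    ∫⁻ x in Ioi (0:ℝ), ENNReal.ofReal (x ^ α) * ENNReal.ofReal (gFun θ a b (x⁻¹ * z)) ∂ρ
      = ∫⁻ x in Ioi (0:ℝ), ENNReal.ofReal (x ^ α) ∂ρ := by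
  obtain ⟨⟨hc, hs⟩, hc0, hs0⟩ := integral_cos_sin hi h0
  set C := a * Real.cos (θ * Real.log z) + b * Real.sin (θ * Real.log z)
  set S := a * Real.sin (θ * Real.log z) - b * Real.cos (θ * Real.log z)
  have key : ∀ x ∈ Ioi (0:ℝ), x ^ α * gFun θ a b (x⁻¹ * z)
      = x ^ α + (C * (x ^ α * Real.cos (θ * Real.log x))
        + S * (x ^ α * Real.sin (θ * Real.log x))) := fun x hx => by
    have hx : 0 < x := hx
    unfold gFun
    rw [Real.log_mul (by positivity) hz.ne', Real.log_inv,
      show θ * (-Real.log x + Real.log z) = θ * Real.log z - θ * Real.log x by ring,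
      Real.cos_sub, Real.sin_sub]
    ring
  have hint : IntegrableOn (fun x : ℝ => x ^ α + (C * (x ^ α * Real.cos (θ * Real.log x))
        + S * (x ^ α * Real.sin (θ * Real.log x)))) (Ioi 0) ρ :=
    hi.add ((hc.const_mul C).add (hs.const_mul S))
  have hnn : ∀ᵐ x ∂ρ.restrict (Ioi 0), 0 ≤ x ^ α + (C * (x ^ α * Real.cos (θ * Real.log x))
        + S * (x ^ α * Real.sin (θ * Real.log x))) := by
    filter_upwards [ae_restrict_mem measurableSet_Ioi] with x hx
    rw [← key x hx]
    exact mul_nonneg (Real.rpow_nonneg (le_of_lt hx) _) (gFun_nonneg hab1 _ _)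
  have hnn' : ∀ᵐ x ∂ρ.restrict (Ioi 0), 0 ≤ x ^ α := by
    filter_upwards [ae_restrict_mem measurableSet_Ioi] with x hx
    exact Real.rpow_nonneg (le_of_lt hx) _
  rw [← ofReal_integral_eq_lintegral_ofReal hi hnn']
  calc _ = ∫⁻ x in Ioi (0:ℝ), ENNReal.ofReal (x ^ α + (C * (x ^ α * Real.cos (θ * Real.log x))
        + S * (x ^ α * Real.sin (θ * Real.log x)))) ∂ρ := by
        refine setLIntegral_congr_fun measurableSet_Ioi fun x hx => ?_
        rw [← key x hx, ENNReal.ofReal_mul (Real.rpow_nonneg (le_of_lt hx) _)]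
    _ = _ := by
        rw [← ofReal_integral_eq_lintegral_ofReal hint hnn,
          integral_add hi (g := fun x => C * (x ^ α * Real.cos (θ * Real.log x))
            + S * (x ^ α * Real.sin (θ * Real.log x))) ((hc.const_mul C).add (hs.const_mul S)),
          integral_add (hc.const_mul C) (hs.const_mul S), integral_const_mul, integral_const_mul,
          hc0, hs0]
        simp

/-- At `θ = 0` the Mellin transform is the integral of a positive function. -/
lemma theta_ne_zero {ρ : Measure ℝ} {α θ : ℝ} (hρ : ρ ≠ 0) (hsupp : ρ (Iic 0) = 0)
    (hi : IntegrableOn (fun x : ℝ => x ^ α) (Ioi 0) ρ)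
    (h0 : (∫ y in Ioi (0:ℝ), (y : ℂ) ^ ((α : ℂ) + (θ : ℂ) * Complex.I) ∂ρ) = 0) : θ ≠ 0 := by
  rintro rfl
  obtain ⟨-, hc0, -⟩ := integral_cos_sin hi h0
  simp only [zero_mul, Real.cos_zero, mul_one] at hc0
  rw [setIntegral_eq_zero_iff_of_nonneg_ae _ hi] at hc0
  · have hF : ∀ᵐ x ∂ρ.restrict (Ioi 0), False := by
      filter_upwards [hc0, ae_restrict_mem measurableSet_Ioi] with x h1 hx
      exact (Real.rpow_pos_of_pos hx α).ne' h1
    have h2 : ρ (Ioi 0) = 0 := by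
      rw [← Measure.restrict_eq_zero, ← ae_eq_bot, ← eventually_false_iff_eq_bot]
      exact hF
    refine hρ (Measure.measure_univ_eq_zero.mp ?_)
    rw [← Iic_union_Ioi (a := (0:ℝ))]
    exact measure_union_null hsupp h2
  · filter_upwards [ae_restrict_mem measurableSet_Ioi] with x hx
    exact Real.rpow_nonneg (le_of_lt hx) _

/-- Theorem 2.1, failure of cancellation when the Mellin transform
vanishes. If `∫₀^∞ y^{α+iθ₀} ρ(dy) = 0` for some `θ₀`, then for any reals `a, b`
with `0 < a² + b² ≤ 1`, the measure `ν(dx) = (1 + a cos(θ₀ log x) + b sin(θ₀ log x)) ν_α(dx)`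
satisfies `ν ⊛ ρ = ν_α ⊛ ρ` while `ν ≠ ν_α`. -/
theorem counterexample_of_mellin_vanishing
    (α : ℝ) (ρ : Measure ℝ) [SigmaFinite ρ] (hρ : ρ ≠ 0) (hsupp : ρ (Iic 0) = 0)
    (hmom : ∃ δ : ℝ, 0 < δ ∧ MomentCond ρ α δ)
    (θ₀ : ℝ) (hθ₀ : (∫ y in Ioi (0:ℝ), (y : ℂ) ^ ((α : ℂ) + (θ₀ : ℂ) * Complex.I) ∂ρ) = 0)
    (a b : ℝ) (hab : 0 < a ^ 2 + b ^ 2) (hab1 : a ^ 2 + b ^ 2 ≤ 1) :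
    mulConv ((nuAlpha α).withDensity fun x =>
        ENNReal.ofReal (1 + a * Real.cos (θ₀ * Real.log x) + b * Real.sin (θ₀ * Real.log x))) ρ
      = mulConv (nuAlpha α) ρ ∧
    ((nuAlpha α).withDensity fun x =>
        ENNReal.ofReal (1 + a * Real.cos (θ₀ * Real.log x) + b * Real.sin (θ₀ * Real.log x)))
      ≠ nuAlpha α := by
  have hi := integrable_rpow hmom
  have hθ := theta_ne_zero hρ hsupp hi hθ₀
  have hgm : Measurable fun x => ENNReal.ofReal (gFun θ₀ a b x) :=
    (measurable_gFun θ₀ a b).ennreal_ofReal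
  have hDm := measurable_densAlpha α
  change mulConv ((nuAlpha α).withDensity fun x => ENNReal.ofReal (gFun θ₀ a b x)) ρ
      = mulConv (nuAlpha α) ρ ∧
    ((nuAlpha α).withDensity fun x => ENNReal.ofReal (gFun θ₀ a b x)) ≠ nuAlpha α
  constructor
  · rw [nuAlpha_eq, ← withDensity_mul _ hDm hgm, mulConv_withDensity ρ hsupp _ (hDm.mul hgm),
      mulConv_withDensity ρ hsupp _ hDm]
    congr 1
    funext z
    have h1 : ∫⁻ x in Ioi (0:ℝ), ENNReal.ofReal x⁻¹ * densAlpha α (x⁻¹ * z) ∂ρ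
        = (∫⁻ x in Ioi (0:ℝ), ENNReal.ofReal (x ^ α) ∂ρ) * densAlpha α z := by
      rw [← lintegral_mul_const _ (by fun_prop)]
      exact setLIntegral_congr_fun measurableSet_Ioi fun x hx => densAlpha_scale α hx z
    have h2 : ∫⁻ x in Ioi (0:ℝ), ENNReal.ofReal x⁻¹ *
          (densAlpha α * fun x => ENNReal.ofReal (gFun θ₀ a b x)) (x⁻¹ * z) ∂ρ
        = (∫⁻ x in Ioi (0:ℝ), ENNReal.ofReal (x ^ α) *
            ENNReal.ofReal (gFun θ₀ a b (x⁻¹ * z)) ∂ρ) * densAlpha α z := by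
      have := measurable_gFun θ₀ a b
      rw [← lintegral_mul_const _ (by fun_prop)]
      refine setLIntegral_congr_fun measurableSet_Ioi fun x hx => ?_
      simp only [Pi.mul_apply]
      rw [← mul_assoc, densAlpha_scale α hx z]
      ring
    rw [h1, h2]
    rcases le_or_gt z 0 with hz | hz
    · have : densAlpha α z = 0 := indicator_of_notMem (by simpa using hz) _
      simp [this]
    · rw [lintegral_gFun hab1 hi hθ₀ hz]
  · intro h
    have : SigmaFinite (nuAlpha α) := by
      unfold nuAlpha
      exact SigmaFinite.withDensity_ofReal _
    have h1 : (fun x => ENNReal.ofReal (gFun θ₀ a b x)) =ᵐ[nuAlpha α] 1 := by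
      rw [← withDensity_eq_iff_of_sigmaFinite hgm.aemeasurable measurable_one.aemeasurable, h,
        withDensity_one]
    have h2 : gFun θ₀ a b =ᵐ[volume.restrict (Ioi 0)] fun _ => 1 := by
      unfold nuAlpha at h1
      have hm : Measurable fun x : ℝ =>
          ENNReal.ofReal (if α = 0 then x⁻¹ else |α| * x ^ (-(α + 1))) := by
        split_ifs <;> fun_prop
      rw [EventuallyEq, ae_withDensity_iff hm] at h1
      filter_upwards [h1, ae_restrict_mem measurableSet_Ioi] with x hx1 hx
      have hx : 0 < x := hx
      refine ENNReal.ofReal_eq_one.mp (hx1 ?_)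
      rw [ne_eq, ENNReal.ofReal_eq_zero, not_le]
      split_ifs with hα
      · positivity
      · have := abs_pos.mpr hα
        positivity
    have hcont : ContinuousOn (gFun θ₀ a b) (Ioi 0) := by
      have hl : ContinuousOn Real.log (Ioi 0) :=
        Real.continuousOn_log.mono fun x hx => (ne_of_gt hx : x ≠ 0)
      unfold gFun
      fun_prop
    have h3 : EqOn (gFun θ₀ a b) (fun _ => 1) (Ioi 0) :=
      Measure.eqOn_open_of_ae_eq h2 isOpen_Ioi hcont continuousOn_const
    -- `θ₀ log x` takes the value `0` at `1` and `π / 2` at `exp (π / 2 / θ₀)`.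
    have ha : a = 0 := by simpa [gFun] using h3 (show (1:ℝ) ∈ Ioi 0 by simp)
    have hb : b = 0 := by
      have := h3 (show Real.exp (Real.pi / 2 / θ₀) ∈ Ioi 0 from Real.exp_pos _)
      simpa [gFun, mul_div_cancel₀ _ hθ] using this
    simp [ha, hb] at hab
end
end

section
/- Let α ∈ ℝ and let ρ be a nonzero σ-finite measure on (0,∞) such that ∫₀^∞ (y^{α−δ} ∨ y^{α+δ}) ρ(dy) < ∞ for some δ > 0, and suppose ρ has an atom, i.e. w₀ = ρ({x₀}) > 0 for some x₀ > 0. If ∫_{y ≠ x₀} y^α ρ(dy) < w₀ x₀^α, then ρ has the cancellation property with respect to {ν_α}. -/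
/-!
The measure `ν_α` is homogeneous, `ν_α (y⁻¹ C) = y ^ α ν_α C` (`nuAlpha_preimage`). Write
`w₀ = ρ {x₀}`, `a = w₀ x₀ ^ α` and `r = ∫_{y ≠ x₀} y ^ α ρ(dy) < a`. Evaluating
`ν ⊛ ρ = ν_α ⊛ ρ` at `C = x₀ B` and splitting off the atom gives
`w₀ ν B + ∫_{y ≠ x₀} ν (y⁻¹ C) ρ(dy) = w₀ ν_α B + ∫_{y ≠ x₀} ν_α (y⁻¹ C) ρ(dy)`.
Dropping the integral on the left shows that `ν` is at most a constant multiple of `ν_α`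
(`exists_relClose`). Moreover, if `|ν B - ν_α B| ≤ ε ν_α B` for all `B` of finite
`ν_α`-measure, then the two integrals differ by at most `ε r ν_α C = ε r x₀ ^ (-α) ν_α B`,
so the same bound holds with `ε` replaced by
`(r / a) ε` (`relClose_step`). Since `r / a < 1`, iterating gives `ν = ν_α` on sets of finite
`ν_α`-measure, hence everywhere by σ-finiteness. No Fourier analysis is needed.
-/

open MeasureTheory Set Filter ProbabilityTheory
open scoped ENNReal Topology

noncomputable section

lemma mulConv_apply (ν ρ : Measure ℝ) [SFinite ν] {C : Set ℝ} (hC : MeasurableSet C) :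
    mulConv ν ρ C = ∫⁻ x, ν ((fun y => x * y) ⁻¹' C) ∂ρ := by
  -- `Measure.bind` is junk unless its kernel is a.e. measurable.
  have hm : Measurable fun x : ℝ => ν.map fun y => x * y := by
    refine Measure.measurable_of_measurable_coe _ fun s hs => ?_
    have : (fun x : ℝ => (ν.map fun y => x * y) s)
        = fun x => ν (Prod.mk x ⁻¹' ((fun p : ℝ × ℝ => p.1 * p.2) ⁻¹' s)) := by
      funext x
      rw [Measure.map_apply (by fun_prop) hs]
      rfl
    rw [this]
    exact measurable_measure_prodMk_left ((by fun_prop : Measurable _) hs)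
  rw [mulConv, Measure.bind_apply hC hm.aemeasurable]
  refine lintegral_congr fun x => ?_
  rw [Measure.map_apply (by fun_prop) hC]

instance sigmaFinite_nuAlpha (α : ℝ) : SigmaFinite (nuAlpha α) := by
  unfold nuAlpha
  infer_instance

lemma nuAlpha_preimage (α : ℝ) {x : ℝ} (hx : 0 < x) {C : Set ℝ} (hC : MeasurableSet C) :
    nuAlpha α ((fun y => x * y) ⁻¹' C) = ENNReal.ofReal (x ^ α) * nuAlpha α C := by
  set d : ℝ → ℝ := fun x => if α = 0 then x⁻¹ else |α| * x ^ (-(α + 1)) with hd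
  have hdm : Measurable d := by
    by_cases h : α = 0
    · simp only [hd, h, if_true]; fun_prop
    · simp only [hd, h, if_false]; fun_prop
  have key : ∀ D : Set ℝ, MeasurableSet D →
      nuAlpha α D = ∫⁻ u, (D ∩ Ioi 0).indicator (fun u => ENNReal.ofReal (d u)) u := by
    intro D hD
    rw [nuAlpha, withDensity_apply _ hD, Measure.restrict_restrict hD,
      lintegral_indicator (hD.inter measurableSet_Ioi)]
  have hpre : MeasurableSet ((fun y => x * y) ⁻¹' C) := (by fun_prop : Measurable _) hC
  have hscale : ∀ u : ℝ, 0 < u → d u = x ^ (α + 1) * d (x * u) := by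
    intro u hu
    by_cases h : α = 0
    · simp only [hd, h, if_true, zero_add, Real.rpow_one]
      field_simp
    · simp only [hd, h, if_false]
      rw [Real.mul_rpow hx.le hu.le, Real.rpow_neg hx.le]
      have := (Real.rpow_pos_of_pos hx (α + 1)).ne'
      field_simp
  have hg : Measurable ((C ∩ Ioi 0).indicator (fun u => ENNReal.ofReal (d u))) :=
    hdm.ennreal_ofReal.indicator (hC.inter measurableSet_Ioi)
  have hmap : ∫⁻ u, (C ∩ Ioi 0).indicator (fun u => ENNReal.ofReal (d u)) (x * u)
      = ENNReal.ofReal x⁻¹ * nuAlpha α C := by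
    rw [← lintegral_map hg (by fun_prop), Real.map_volume_mul_left hx.ne', lintegral_smul_measure,
      key C hC, abs_of_pos (inv_pos.2 hx), smul_eq_mul]
  rw [key _ hpre]
  have : ∀ u, (((fun y => x * y) ⁻¹' C) ∩ Ioi 0).indicator (fun u => ENNReal.ofReal (d u)) u
      = ENNReal.ofReal (x ^ (α + 1)) *
        (C ∩ Ioi 0).indicator (fun u => ENNReal.ofReal (d u)) (x * u) := by
    intro u
    by_cases hu : 0 < u
    · by_cases hc : x * u ∈ C
      · rw [indicator_of_mem (by exact ⟨hc, hu⟩), indicator_of_mem (by exact ⟨hc, mul_pos hx hu⟩),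
          ← ENNReal.ofReal_mul (Real.rpow_nonneg hx.le _), ← hscale u hu]
      · rw [indicator_of_notMem (fun h => hc h.1), indicator_of_notMem (fun h => hc h.1), mul_zero]
    · rw [indicator_of_notMem (fun h => hu h.2),
        indicator_of_notMem (fun h => hu ((pos_iff_pos_of_mul_pos h.2).1 hx)), mul_zero]
  rw [lintegral_congr this, lintegral_const_mul' _ _ ENNReal.ofReal_ne_top, hmap, ← mul_assoc,
    ← ENNReal.ofReal_mul (Real.rpow_nonneg hx.le _), Real.rpow_add_one hx.ne', mul_assoc,
    mul_inv_cancel₀ hx.ne', mul_one]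

/-- `|ν B - μ B| ≤ ε μ B` for every measurable `B` of finite `μ`-measure, written as two
inequalities so that no subtraction occurs in `ℝ≥0∞`. -/
def RelClose (ν μ : Measure ℝ) (ε : ℝ≥0∞) : Prop :=
  ∀ B, MeasurableSet B → μ B ≠ ⊤ → ν B ≤ μ B + ε * μ B ∧ μ B ≤ ν B + ε * μ B

/-- The equation `ν ⊛ ρ = ν_α ⊛ ρ` evaluated at the dilate `x₀ B`, with the contribution of the atom
of `ρ` at `x₀` separated. The set `x₀ B` is written as a preimage under `z ↦ x₀⁻¹ z`. -/
lemma split_atom {α : ℝ} {ρ ν : Measure ℝ} [SFinite ν] (hsupp : ρ (Iic 0) = 0)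
    {x₀ : ℝ} (hx₀ : 0 < x₀) (h : mulConv ν ρ = mulConv (nuAlpha α) ρ)
    {B : Set ℝ} (hB : MeasurableSet B) :
    ν B * ρ {x₀} + ∫⁻ y in Ioi (0:ℝ) \ {x₀}, ν ((fun z => y * z) ⁻¹' ((fun z => x₀⁻¹ * z) ⁻¹' B)) ∂ρ
      = nuAlpha α B * ρ {x₀} + ∫⁻ y in Ioi (0:ℝ) \ {x₀},
        nuAlpha α ((fun z => y * z) ⁻¹' ((fun z => x₀⁻¹ * z) ⁻¹' B)) ∂ρ := by
  set C := (fun z => x₀⁻¹ * z) ⁻¹' B with hCdef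
  have hC : MeasurableSet C := (by fun_prop : Measurable _) hB
  have hCB : (fun z => x₀ * z) ⁻¹' C = B := by
    ext z
    simp [hCdef, hx₀.ne']
  have hρ0 : ρ.restrict (Ioi 0) = ρ := by
    refine Measure.restrict_eq_self_of_ae_mem ?_
    rw [ae_iff]
    convert hsupp using 2
    ext; simp
  have split : ∀ f : ℝ → ℝ≥0∞,
      ∫⁻ y, f y ∂ρ = f x₀ * ρ {x₀} + ∫⁻ y in Ioi (0:ℝ) \ {x₀}, f y ∂ρ := by
    intro f
    conv_lhs => rw [← hρ0]
    rw [← lintegral_inter_add_sdiff f (Ioi 0) (measurableSet_singleton x₀),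
      inter_eq_self_of_subset_right (singleton_subset_iff.2 (mem_Ioi.2 hx₀)), lintegral_singleton]
  have := congrArg (fun m => m C) h
  simpa only [mulConv_apply _ _ hC, split, hCB] using this

/-- The contraction: `ν` and `ν_α` differ on `B` by `1 / ρ {x₀}` times the difference of
their integrals over `y ≠ x₀`, which scales the error by the ratio of the two `α`-moments. -/
lemma relClose_step {α : ℝ} {ρ ν : Measure ℝ} [SFinite ν] (hsupp : ρ (Iic 0) = 0)
    {x₀ : ℝ} (hx₀ : 0 < x₀) (hatom : 0 < ρ {x₀}) (hfin : ρ {x₀} ≠ ⊤)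
    (hr : ∫⁻ y in Ioi (0:ℝ) \ {x₀}, ENNReal.ofReal (y ^ α) ∂ρ ≠ ⊤)
    (h : mulConv ν ρ = mulConv (nuAlpha α) ρ) {ε : ℝ≥0∞} (hε : RelClose ν (nuAlpha α) ε) :
    RelClose ν (nuAlpha α) ((∫⁻ y in Ioi (0:ℝ) \ {x₀}, ENNReal.ofReal (y ^ α) ∂ρ) /
      (ρ {x₀} * ENNReal.ofReal (x₀ ^ α)) * ε) := by
  intro B hB hBfin
  set μ := nuAlpha α with hμ
  set r := ∫⁻ y in Ioi (0:ℝ) \ {x₀}, ENNReal.ofReal (y ^ α) ∂ρ with hrdef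
  set w := ρ {x₀} with hw
  set X := ENNReal.ofReal (x₀ ^ α) with hX
  have hX0 : X ≠ 0 := (ENNReal.ofReal_pos.2 (Real.rpow_pos_of_pos hx₀ α)).ne'
  set C := (fun z => x₀⁻¹ * z) ⁻¹' B with hCdef
  have hC : MeasurableSet C := (by fun_prop : Measurable _) hB
  have hCm : μ C = X⁻¹ * μ B := by
    rw [hCdef, hμ, nuAlpha_preimage α (inv_pos.2 hx₀) hB, Real.inv_rpow hx₀.le,
      ENNReal.ofReal_inv_of_pos (Real.rpow_pos_of_pos hx₀ α)]
  have hCfin : μ C ≠ ⊤ := by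
    rw [hCm]
    exact ENNReal.mul_ne_top (ENNReal.inv_ne_top.2 hX0) hBfin
  have hS : MeasurableSet (Ioi (0:ℝ) \ {x₀}) := measurableSet_Ioi.diff (measurableSet_singleton _)
  have hsc : ∀ y ∈ Ioi (0:ℝ) \ {x₀},
      μ ((fun z => y * z) ⁻¹' C) = ENNReal.ofReal (y ^ α) * μ C :=
    fun y hy => nuAlpha_preimage α hy.1 hC
  have hclose : ∀ y ∈ Ioi (0:ℝ) \ {x₀},
      ν ((fun z => y * z) ⁻¹' C)
        ≤ ENNReal.ofReal (y ^ α) * μ C + ε * (ENNReal.ofReal (y ^ α) * μ C) ∧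
      ENNReal.ofReal (y ^ α) * μ C
        ≤ ν ((fun z => y * z) ⁻¹' C) + ε * (ENNReal.ofReal (y ^ α) * μ C) := by
    intro y hy
    rw [← hsc y hy]
    refine hε _ ((by fun_prop : Measurable _) hC) ?_
    rw [hsc y hy]
    exact ENNReal.mul_ne_top ENNReal.ofReal_ne_top hCfin
  have hsplit := split_atom hsupp hx₀ h hB
  rw [setLIntegral_congr_fun hS hsc, lintegral_mul_const _ (by fun_prop), ← hrdef] at hsplit
  set I := ∫⁻ y in Ioi (0:ℝ) \ {x₀}, ν ((fun z => y * z) ⁻¹' C) ∂ρ with hI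
  have hgm : Measurable fun y : ℝ => ENNReal.ofReal (y ^ α) * μ C := by fun_prop
  have hg : ∫⁻ y in Ioi (0:ℝ) \ {x₀}, ENNReal.ofReal (y ^ α) * μ C ∂ρ = r * μ C :=
    lintegral_mul_const _ (by fun_prop)
  have hI1 : I ≤ r * μ C + ε * (r * μ C) := by
    refine (setLIntegral_mono' hS fun y hy => (hclose y hy).1).trans_eq ?_
    rw [lintegral_add_left hgm, lintegral_const_mul _ hgm, hg]
  have hI2 : r * μ C ≤ I + ε * (r * μ C) := by
    rw [← hg]
    refine (setLIntegral_mono' hS fun y hy => (hclose y hy).2).trans_eq ?_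
    rw [lintegral_add_right _ (hgm.const_mul ε), lintegral_const_mul _ hgm]
  have hJfin : r * μ C ≠ ⊤ := ENNReal.mul_ne_top hr hCfin
  have hIfin : I ≠ ⊤ := by
    refine ne_top_of_le_ne_top ?_ (le_add_self.trans_eq hsplit)
    exact ENNReal.add_ne_top.2 ⟨ENNReal.mul_ne_top hBfin hfin, hJfin⟩
  have hdiv : ε * (r * μ C) = (r / (w * X) * ε * μ B) * w := by
    rw [hCm, div_eq_mul_inv, ENNReal.mul_inv (Or.inl hatom.ne') (Or.inl hfin)]
    calc ε * (r * (X⁻¹ * μ B)) = (w⁻¹ * w) * (ε * (r * (X⁻¹ * μ B))) := by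
          rw [ENNReal.inv_mul_cancel hatom.ne' hfin, one_mul]
      _ = _ := by ring
  -- In each half, multiply by the mass of the atom and cancel a finite integral over `y ≠ x₀`.
  constructor
  · refine (ENNReal.mul_le_mul_iff_left hatom.ne' hfin).1 ?_
    rw [add_mul, ← hdiv]
    refine (ENNReal.add_le_add_iff_right hIfin).1 ?_
    rw [hsplit, add_assoc, add_comm _ I]
    gcongr
  · refine (ENNReal.mul_le_mul_iff_left hatom.ne' hfin).1 ?_
    rw [add_mul, ← hdiv]
    refine (ENNReal.add_le_add_iff_right hJfin).1 ?_
    rw [← hsplit, add_assoc, add_comm (ε * _)]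
    gcongr

/-- The a priori bound that starts the iteration: discarding all of `ρ` but its atom on the left of
`split_atom` bounds `ν` by a finite multiple of `ν_α`. -/
lemma exists_relClose {α : ℝ} {ρ ν : Measure ℝ} [SFinite ν] (hsupp : ρ (Iic 0) = 0)
    {x₀ : ℝ} (hx₀ : 0 < x₀) (hatom : 0 < ρ {x₀}) (hfin : ρ {x₀} ≠ ⊤)
    (hr : ∫⁻ y in Ioi (0:ℝ) \ {x₀}, ENNReal.ofReal (y ^ α) ∂ρ ≠ ⊤)
    (h : mulConv ν ρ = mulConv (nuAlpha α) ρ) :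
    ∃ ε : ℝ≥0∞, ε ≠ ⊤ ∧ RelClose ν (nuAlpha α) ε := by
  set r := ∫⁻ y in Ioi (0:ℝ) \ {x₀}, ENNReal.ofReal (y ^ α) ∂ρ with hrdef
  set w := ρ {x₀} with hw
  refine ⟨1 + w⁻¹ * (r * ENNReal.ofReal (x₀⁻¹ ^ α)), ENNReal.add_ne_top.2 ⟨ENNReal.one_ne_top,
    ENNReal.mul_ne_top (ENNReal.inv_ne_top.2 hatom.ne')
      (ENNReal.mul_ne_top hr ENNReal.ofReal_ne_top)⟩, fun B hB hBfin => ⟨?_, ?_⟩⟩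
  · have hC : MeasurableSet ((fun z => x₀⁻¹ * z) ⁻¹' B) := (by fun_prop : Measurable _) hB
    have hS : MeasurableSet (Ioi (0:ℝ) \ {x₀}) := measurableSet_Ioi.diff (measurableSet_singleton _)
    have hsplit := split_atom hsupp hx₀ h hB
    rw [setLIntegral_congr_fun hS (fun y hy => nuAlpha_preimage α hy.1 hC),
      lintegral_mul_const _ (by fun_prop), ← hrdef, nuAlpha_preimage α (inv_pos.2 hx₀) hB]
      at hsplit
    refine (ENNReal.mul_le_mul_iff_left hatom.ne' hfin).1 ((le_self_add.trans_eq hsplit).trans ?_)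
    calc nuAlpha α B * w + r * (ENNReal.ofReal (x₀⁻¹ ^ α) * nuAlpha α B)
        = nuAlpha α B * w + (w⁻¹ * w) * (r * (ENNReal.ofReal (x₀⁻¹ ^ α) * nuAlpha α B)) := by
          rw [ENNReal.inv_mul_cancel hatom.ne' hfin, one_mul]
      _ ≤ nuAlpha α B * w + (w⁻¹ * w) * (r * (ENNReal.ofReal (x₀⁻¹ ^ α) * nuAlpha α B))
          + nuAlpha α B * w := le_self_add
      _ = _ := by ring
  · rw [add_mul, one_mul]
    exact le_add_left le_self_add

lemma eq_of_forall_finite {ν μ : Measure ℝ} [SigmaFinite μ]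
    (h : ∀ B, MeasurableSet B → μ B ≠ ⊤ → ν B = μ B) : ν = μ := by
  ext B hB
  have hU : B = ⋃ n, B ∩ spanningSets μ n := by
    rw [← inter_iUnion, iUnion_spanningSets, inter_univ]
  have hm : Monotone fun n => B ∩ spanningSets μ n :=
    fun m n hmn => inter_subset_inter_right _ (monotone_spanningSets μ hmn)
  rw [hU, hm.measure_iUnion, hm.measure_iUnion]
  refine iSup_congr fun n => h _ (hB.inter (measurableSet_spanningSets μ n)) ?_
  exact ((measure_mono inter_subset_right).trans_lt (measure_spanningSets_lt_top μ n)).ne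

/-- Corollary 2.2(i). If `ρ` has an atom `w₀ = ρ({x₀}) > 0` at some
`x₀ > 0` and `∫_{y ≠ x₀} y^α ρ(dy) < w₀ x₀^α`, then `ρ` has the cancellation property
with respect to `{ν_α}`. -/
theorem cancellation_of_dominating_atom
    (α : ℝ) (ρ : Measure ℝ) [SigmaFinite ρ] (hρ : ρ ≠ 0) (hsupp : ρ (Iic 0) = 0)
    (hmom : ∃ δ : ℝ, 0 < δ ∧ MomentCond ρ α δ)
    (x₀ : ℝ) (hx₀ : 0 < x₀) (hatom : 0 < ρ {x₀})
    (hlt : ∫⁻ y in Ioi (0:ℝ) \ {x₀}, ENNReal.ofReal (y ^ α) ∂ρ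
        < ρ {x₀} * ENNReal.ofReal (x₀ ^ α)) :
    HasCancellation ρ α := by
  intro ν hν _ h
  have hfin : ρ {x₀} ≠ ⊤ :=
    ((measure_mono (singleton_subset_iff.2 (mem_spanningSetsIndex ρ x₀))).trans_lt
      (measure_spanningSets_lt_top ρ _)).ne
  have hr := hlt.ne_top
  set r := ∫⁻ y in Ioi (0:ℝ) \ {x₀}, ENNReal.ofReal (y ^ α) ∂ρ with hrdef
  set q := r / (ρ {x₀} * ENNReal.ofReal (x₀ ^ α)) with hq
  have hq1 : q < 1 := by
    rw [hq, ENNReal.div_lt_iff (Or.inl (pos_of_gt hlt).ne')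
      (Or.inl (ENNReal.mul_ne_top hfin ENNReal.ofReal_ne_top)), one_mul]
    exact hlt
  obtain ⟨ε, hεfin, hε⟩ := exists_relClose hsupp hx₀ hatom hfin hr h
  have hiter : ∀ n : ℕ, RelClose ν (nuAlpha α) (q ^ n * ε) := by
    intro n
    induction n with
    | zero => simpa using hε
    | succ n ih =>
      rw [pow_succ', mul_assoc]
      exact relClose_step hsupp hx₀ hatom hfin hr h ih
  refine eq_of_forall_finite fun B hB hBfin => ?_
  have hlim : Tendsto (fun n : ℕ => q ^ n * ε * nuAlpha α B) atTop (𝓝 0) := by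
    have := ENNReal.Tendsto.mul_const (b := ε * nuAlpha α B)
      (ENNReal.tendsto_pow_atTop_nhds_zero_of_lt_one hq1)
      (Or.inr (ENNReal.mul_ne_top hεfin hBfin))
    simpa only [zero_mul, mul_assoc] using this
  refine le_antisymm ?_ ?_
  · have := hlim.const_add (nuAlpha α B)
    rw [add_zero] at this
    exact ge_of_tendsto' this fun n => (hiter n B hB hBfin).1
  · have := hlim.const_add (ν B)
    rw [add_zero] at this
    exact ge_of_tendsto' this fun n => (hiter n B hB hBfin).2
end
end
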